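/- The minimal width of the regular pentagon K = conv{v_0,...,v_4}, v_k = (cos(2πk/5), sin(2πk/5)), equals 1 + cos(π/5), and the diagonal length |v_3 - v_0| = 2·sin(3π/5) exceeds it. -/

import Mathlib

/-!
For odd `n = 2 * m + 1` the longest diagonals of the regular `n`-gon have length `2 cos (π / (2n))`,
and their `n` directions divide the half-turn into equal angles `π / n`. Every direction `u` is
therefore within `π / (2n)` of some longest diagonal, whose projection onto `u` is at least
`2 cos² (π / (2n)) = 1 + cos (π / n)`. The direction of a vertex attains this bound, since the
opposite edge is orthogonal to it at distance `cos (π / n)` from the center.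
-/

open Real

noncomputable def vtx (k : ℕ) : ℝ × ℝ :=
  (Real.cos (2*π*k/5), Real.sin (2*π*k/5))

def dot (a b : ℝ × ℝ) : ℝ := a.1 * b.1 + a.2 * b.2

/-- Support function of the pentagon K. -/
noncomputable def hK (u : ℝ × ℝ) : ℝ :=
  sSup {r : ℝ | ∃ x ∈ convexHull ℝ {p : ℝ × ℝ | ∃ k < 5, p = vtx k}, r = dot x u}

section SupportFunction

/-- The support function of `s ⊆ ℝ²`. As in `hK`, the supremum is taken in `ℝ`, hence it is only
meaningful for bounded nonempty `s`. -/
noncomputable def supportFun (s : Set (ℝ × ℝ)) (u : ℝ × ℝ) : ℝ :=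
  sSup {r : ℝ | ∃ x ∈ s, r = dot x u}

/-- The distance between the two supporting lines of `s` orthogonal to the unit vector `u`. -/
noncomputable def directionalWidth (s : Set (ℝ × ℝ)) (u : ℝ × ℝ) : ℝ :=
  supportFun s u + supportFun s (-u)

/-- The minimal width of `s`: the infimum of its widths over all unit vectors. -/
noncomputable def minWidth (s : Set (ℝ × ℝ)) : ℝ :=
  sInf {r : ℝ | ∃ u : ℝ × ℝ, u.1 ^ 2 + u.2 ^ 2 = 1 ∧ r = directionalWidth s u}

variable {s : Set (ℝ × ℝ)} {x y u : ℝ × ℝ}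

lemma dot_neg_right (x u : ℝ × ℝ) : dot x (-u) = -dot x u := by
  simp only [dot, Prod.fst_neg, Prod.snd_neg]
  ring

lemma isLinearMap_dot_left (u : ℝ × ℝ) : IsLinearMap ℝ fun x => dot x u where
  map_add x y := by
    simp only [dot, Prod.fst_add, Prod.snd_add]
    ring
  map_smul c x := by
    simp only [dot, Prod.smul_fst, Prod.smul_snd, smul_eq_mul]
    ring

lemma dot_le_supportFun (hs : IsCompact s) (hx : x ∈ s) : dot x u ≤ supportFun s u := by
  have hcont : ContinuousOn (fun x => dot x u) s := by
    unfold dot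
    fun_prop
  have hset : {r : ℝ | ∃ x ∈ s, r = dot x u} = (fun x => dot x u) '' s := by
    ext r
    simp only [Set.mem_ofPred_eq, Set.mem_image, eq_comm]
  exact le_csSup (hset ▸ hs.bddAbove_image hcont) ⟨x, hx, rfl⟩

lemma supportFun_convexHull_le {M : ℝ} (hs : s.Nonempty) (hM : ∀ x ∈ s, dot x u ≤ M) :
    supportFun (convexHull ℝ s) u ≤ M := by
  obtain ⟨x₀, hx₀⟩ := hs
  refine csSup_le ⟨_, x₀, subset_convexHull ℝ s hx₀, rfl⟩ ?_
  rintro _ ⟨x, hx, rfl⟩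
  exact convexHull_min hM (convex_halfSpace_le (isLinearMap_dot_left u) M) hx

lemma abs_dot_sub_dot_le_directionalWidth (hs : IsCompact s) (hx : x ∈ s) (hy : y ∈ s) :
    |dot x u - dot y u| ≤ directionalWidth s u := by
  have dot_sub_le {x y : ℝ × ℝ} (hx : x ∈ s) (hy : y ∈ s) :
      dot x u - dot y u ≤ directionalWidth s u := by
    rw [sub_eq_add_neg, ← dot_neg_right]
    exact add_le_add (dot_le_supportFun hs hx) (dot_le_supportFun hs hy)
  exact abs_sub_le_iff.2 ⟨dot_sub_le hx hy, dot_sub_le hy hx⟩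

end SupportFunction

section Circle

/-- The point of the unit circle at angle `θ`. -/
noncomputable def circlePoint (θ : ℝ) : ℝ × ℝ :=
  (cos θ, sin θ)

lemma exists_circlePoint_eq {u : ℝ × ℝ} (hu : u.1 ^ 2 + u.2 ^ 2 = 1) :
    ∃ θ, circlePoint θ = u := by
  have hnorm : ‖(⟨u.1, u.2⟩ : ℂ)‖ = 1 := by
    rw [Complex.norm_eq_sqrt_sq_add_sq, hu, sqrt_one]
  refine ⟨Complex.arg ⟨u.1, u.2⟩, Prod.ext ?_ ?_⟩
  · simpa only [circlePoint, hnorm, one_mul] using Complex.norm_mul_cos_arg ⟨u.1, u.2⟩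
  · simpa only [circlePoint, hnorm, one_mul] using Complex.norm_mul_sin_arg ⟨u.1, u.2⟩

lemma circlePoint_add_int_mul_two_pi (θ : ℝ) (k : ℤ) :
    circlePoint (θ + k * (2 * π)) = circlePoint θ :=
  Prod.ext (cos_add_int_mul_two_pi θ k) (sin_add_int_mul_two_pi θ k)

lemma dot_circlePoint (α β : ℝ) : dot (circlePoint α) (circlePoint β) = cos (α - β) :=
  (cos_sub α β).symm

lemma circlePoint_chord_length (α β : ℝ) :
    √((circlePoint α - circlePoint β).1 ^ 2 + (circlePoint α - circlePoint β).2 ^ 2) =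
      2 * |sin ((α - β) / 2)| := by
  have hsq : (circlePoint α - circlePoint β).1 ^ 2 + (circlePoint α - circlePoint β).2 ^ 2 =
      (2 * sin ((α - β) / 2)) ^ 2 := by
    simp only [circlePoint, Prod.fst_sub, Prod.snd_sub]
    rw [mul_pow, sin_sq_eq_half_sub, mul_div_cancel₀ _ two_ne_zero, cos_sub]
    linear_combination sin_sq_add_cos_sq α + sin_sq_add_cos_sq β
  rw [hsq, sqrt_sq_eq_abs, abs_mul, abs_two]

end Circle

section EquallySpacedAngles

lemma one_add_cos_eq_two_mul_cos_half_sq (x : ℝ) : 1 + cos x = 2 * cos (x / 2) ^ 2 := by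
  rw [cos_sq, mul_div_cancel₀ x two_ne_zero]
  ring

lemma exists_int_cos_half_le_cos {δ : ℝ} (hδ : 0 < δ) (hδπ : δ ≤ 2 * π) (θ : ℝ) :
    ∃ j : ℤ, cos (δ / 2) ≤ cos (j * δ - θ) := by
  refine ⟨round (θ / δ), ?_⟩
  have hdist : |round (θ / δ) * δ - θ| ≤ δ / 2 :=
    calc |round (θ / δ) * δ - θ| = |(θ / δ - round (θ / δ)) * δ| := by
          rw [abs_sub_comm, sub_mul, div_mul_cancel₀ θ hδ.ne']
      _ = |θ / δ - round (θ / δ)| * δ := by rw [abs_mul, abs_of_pos hδ]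
      _ ≤ 1 / 2 * δ := by gcongr; exact abs_sub_round _
      _ = δ / 2 := by ring
  rw [← cos_abs (_ - θ)]
  exact cos_le_cos_of_nonneg_of_le_pi (abs_nonneg _) (by linarith) hdist

variable {n : ℕ}

lemma exists_int_cos_le_abs_sin (hn : Odd n) (m : ℤ) (θ : ℝ) :
    ∃ i : ℤ, cos (π / n / 2) ≤ |sin ((2 * i + m) * (π / n) - θ)| := by
  have hn₁ : (1 : ℝ) ≤ n := by exact_mod_cast hn.pos
  obtain ⟨j, hj⟩ : ∃ j : ℤ, cos (π / n / 2) ≤ cos (j * (π / n) - (θ + π / 2)) :=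
    exists_int_cos_half_le_cos (by positivity)
      ((div_le_self pi_nonneg hn₁).trans (by linarith [pi_pos])) _
  rw [← sub_sub, cos_sub_pi_div_two] at hj
  -- `j` may have the wrong parity; adding the odd number `n` adjusts it and only flips the sine.
  rcases Int.even_or_odd (j - m) with ⟨i, hi⟩ | hodd
  · have hji : (j : ℝ) = 2 * i + m := by
      rw [← two_mul, sub_eq_iff_eq_add] at hi
      exact_mod_cast hi
    exact ⟨i, hji ▸ hj.trans (le_abs_self _)⟩
  · obtain ⟨i, hi⟩ := hodd.add_odd (hn.natCast (R := ℤ))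
    have hji : (2 * i + m : ℝ) = j + n := by
      have : 2 * i + m = j + n := by omega
      exact_mod_cast this
    have hshift : (2 * i + m) * (π / n) - θ = j * (π / n) - θ + π := by
      rw [hji]
      field_simp
      ring
    refine ⟨i, ?_⟩
    rw [hshift, sin_add_pi, abs_neg]
    exact hj.trans (le_abs_self _)

lemma neg_cos_two_pi_mul_div_le (hn : Odd n) {k : ℕ} (hk : k ≤ n) :
    -cos (2 * π * k / n) ≤ cos (π / n) := by
  have hn₀ : (0 : ℝ) < n := by exact_mod_cast hn.pos
  have hangle : π - 2 * π * k / n = (n - 2 * k) * (π / n) := by field_simp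
  have hlower : (1 : ℝ) ≤ |(n : ℝ) - 2 * k| := by
    obtain ⟨m, rfl⟩ := hn
    have : (1 : ℤ) ≤ |((2 * m + 1 : ℕ) : ℤ) - 2 * k| := Int.one_le_abs (by omega)
    exact_mod_cast this
  have hupper : |(n : ℝ) - 2 * k| ≤ n := by
    have : (k : ℝ) ≤ n := by exact_mod_cast hk
    exact abs_le.2 ⟨by linarith, by linarith [k.cast_nonneg (α := ℝ)]⟩
  rw [← cos_pi_sub, ← cos_abs (π - _), hangle, abs_mul, abs_of_pos (div_pos pi_pos hn₀)]
  apply cos_le_cos_of_nonneg_of_le_pi (by positivity)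
  · calc |(n : ℝ) - 2 * k| * (π / n) ≤ n * (π / n) := by gcongr
      _ = π := mul_div_cancel₀ π hn₀.ne'
  · exact le_mul_of_one_le_left (by positivity) hlower

end EquallySpacedAngles

section RegularPolygon

/-- The `k`-th vertex of the regular `n`-gon inscribed in the unit circle. The index is an integer,
read modulo `n`. -/
noncomputable def polygonVertex (n : ℕ) (k : ℤ) : ℝ × ℝ :=
  circlePoint (2 * π * k / n)

/-- The regular `n`-gon inscribed in the unit circle, with a vertex at `(1, 0)`. -/
noncomputable def regularPolygon (n : ℕ) : Set (ℝ × ℝ) :=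
  convexHull ℝ {p | ∃ k < n, p = polygonVertex n k}

variable {n m : ℕ}

lemma polygonVertex_emod (hn : n ≠ 0) (k : ℤ) :
    polygonVertex n (k % n) = polygonVertex n k := by
  have hk : (k : ℝ) = (k % n : ℤ) + n * (k / n : ℤ) := by
    exact_mod_cast (Int.emod_add_mul_ediv k n).symm
  have hangle : 2 * π * k / n = 2 * π * (k % n : ℤ) / n + (k / n : ℤ) * (2 * π) := by
    rw [hk]
    field_simp
  rw [polygonVertex, polygonVertex, hangle, circlePoint_add_int_mul_two_pi]

lemma polygonVertex_mem_regularPolygon (hn : n ≠ 0) (k : ℤ) :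
    polygonVertex n k ∈ regularPolygon n := by
  have hnonneg : 0 ≤ k % n := Int.emod_nonneg k (by exact_mod_cast hn)
  have hlt : k % n < n := Int.emod_lt_of_pos k (by omega)
  refine subset_convexHull ℝ _ ⟨(k % n).toNat, by omega, ?_⟩
  rw [Int.toNat_of_nonneg hnonneg, polygonVertex_emod hn]

lemma isCompact_regularPolygon (n : ℕ) : IsCompact (regularPolygon n) := by
  have hfin : {p | ∃ k < n, p = polygonVertex n k}.Finite :=
    ((Set.finite_Iio n).image fun k : ℕ => polygonVertex n k).subset
      fun _ ⟨k, hk, hp⟩ => ⟨k, hk, hp.symm⟩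
  exact hfin.isCompact_convexHull ℝ

lemma sin_succ_mul_pi_div (hn : n = 2 * m + 1) :
    sin ((m + 1) * π / n) = cos (π / n / 2) := by
  rw [← sin_add_pi_div_two, hn]
  congr 1
  push_cast
  field_simp
  ring

lemma cos_pi_div_div_two_nonneg (hn : n ≠ 0) : 0 ≤ cos (π / n / 2) := by
  have hle : π / n ≤ π := div_le_self pi_nonneg (by exact_mod_cast Nat.one_le_iff_ne_zero.2 hn)
  exact cos_nonneg_of_neg_pi_div_two_le_of_le
    (by linarith [pi_pos, (by positivity : 0 ≤ π / n)]) (by linarith)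

lemma abs_dot_polygonVertex_sub_dot_polygonVertex (hn : n = 2 * m + 1) (i : ℤ) (θ : ℝ) :
    |dot (polygonVertex n (i + (m + 1))) (circlePoint θ) -
        dot (polygonVertex n i) (circlePoint θ)| =
      2 * cos (π / n / 2) * |sin ((2 * i + (m + 1 : ℤ)) * (π / n) - θ)| := by
  have hmid : (2 * π * (i + (m + 1) : ℤ) / n - θ + (2 * π * i / n - θ)) / 2 =
      (2 * i + (m + 1 : ℤ)) * (π / n) - θ := by
    push_cast
    ring
  have hhalf : (2 * π * (i + (m + 1) : ℤ) / n - θ - (2 * π * i / n - θ)) / 2 =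
      (m + 1) * π / n := by
    push_cast
    ring
  rw [polygonVertex, polygonVertex, dot_circlePoint, dot_circlePoint, cos_sub_cos, hmid, hhalf,
    sin_succ_mul_pi_div hn, abs_mul, abs_mul, abs_neg, abs_two,
    abs_of_nonneg (cos_pi_div_div_two_nonneg (by omega))]
  ring

lemma one_add_cos_le_directionalWidth (hn : Odd n) (θ : ℝ) :
    1 + cos (π / n) ≤ directionalWidth (regularPolygon n) (circlePoint θ) := by
  have hn₀ : n ≠ 0 := hn.pos.ne'
  have hcos : 0 ≤ cos (π / n / 2) := cos_pi_div_div_two_nonneg hn₀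
  obtain ⟨m, hm⟩ := hn
  obtain ⟨i, hi⟩ := exists_int_cos_le_abs_sin ⟨m, hm⟩ (m + 1) θ
  calc 1 + cos (π / n) = 2 * cos (π / n / 2) * cos (π / n / 2) := by
        rw [one_add_cos_eq_two_mul_cos_half_sq, sq, mul_assoc]
    _ ≤ 2 * cos (π / n / 2) * |sin ((2 * i + (m + 1 : ℤ)) * (π / n) - θ)| := by gcongr
    _ = _ := (abs_dot_polygonVertex_sub_dot_polygonVertex hm i θ).symm
    _ ≤ directionalWidth (regularPolygon n) (circlePoint θ) :=
      abs_dot_sub_dot_le_directionalWidth (isCompact_regularPolygon n)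
        (polygonVertex_mem_regularPolygon hn₀ _) (polygonVertex_mem_regularPolygon hn₀ _)

lemma directionalWidth_circlePoint_zero_le (hn : Odd n) :
    directionalWidth (regularPolygon n) (circlePoint 0) ≤ 1 + cos (π / n) := by
  have hne : {p | ∃ k < n, p = polygonVertex n k}.Nonempty := ⟨_, 0, hn.pos, rfl⟩
  refine add_le_add (supportFun_convexHull_le hne ?_) (supportFun_convexHull_le hne ?_)
  · rintro _ ⟨k, _, rfl⟩
    rw [polygonVertex, dot_circlePoint]
    exact cos_le_one _
  · rintro _ ⟨k, hk, rfl⟩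
    rw [polygonVertex, dot_neg_right, dot_circlePoint, sub_zero, Int.cast_natCast]
    exact neg_cos_two_pi_mul_div_le hn hk.le

theorem minWidth_regularPolygon (hn : Odd n) :
    minWidth (regularPolygon n) = 1 + cos (π / n) := by
  refine IsLeast.csInf_eq ⟨⟨circlePoint 0, cos_sq_add_sin_sq 0, ?_⟩, ?_⟩
  · exact (one_add_cos_le_directionalWidth hn 0).antisymm
      (directionalWidth_circlePoint_zero_le hn)
  · rintro _ ⟨u, hu, rfl⟩
    obtain ⟨θ, rfl⟩ := exists_circlePoint_eq hu
    exact one_add_cos_le_directionalWidth hn θ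

lemma polygonVertex_chord_length {k : ℕ} (hk : k ≤ n) :
    √((polygonVertex n k - polygonVertex n 0).1 ^ 2 +
        (polygonVertex n k - polygonVertex n 0).2 ^ 2) = 2 * sin (k * π / n) := by
  have hangle : (2 * π * (k : ℤ) / n - 2 * π * (0 : ℤ) / n) / 2 = k * π / n := by
    push_cast
    ring
  have hsin : 0 ≤ sin (k * π / n) := by
    apply sin_nonneg_of_nonneg_of_le_pi (by positivity)
    rw [mul_div_right_comm]
    exact mul_le_of_le_one_left pi_nonneg
      (div_le_one_of_le₀ (by exact_mod_cast hk) n.cast_nonneg)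
  rw [polygonVertex, polygonVertex, circlePoint_chord_length, hangle, abs_of_nonneg hsin]

lemma one_add_cos_lt_two_mul_cos_half {x : ℝ} (hx₀ : 0 < x) (hx : x < π) :
    1 + cos x < 2 * cos (x / 2) := by
  have hpos : 0 < cos (x / 2) := cos_pos_of_mem_Ioo ⟨by linarith, by linarith⟩
  have hlt : cos (x / 2) < 1 := by
    simpa only [cos_zero] using
      cos_lt_cos_of_nonneg_of_le_pi le_rfl (by linarith : x / 2 ≤ π) (by linarith : 0 < x / 2)
  rw [one_add_cos_eq_two_mul_cos_half_sq]
  nlinarith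

theorem pentagon_minimal_width_general (hn : n = 2 * m + 1) (hm : 0 < m) :
    minWidth (regularPolygon n) = 1 + cos (π / n) ∧
      √((polygonVertex n (m + 1) - polygonVertex n 0).1 ^ 2 +
          (polygonVertex n (m + 1) - polygonVertex n 0).2 ^ 2) =
        2 * sin ((m + 1) * π / n) ∧
      1 + cos (π / n) < 2 * sin ((m + 1) * π / n) := by
  have hn₁ : (1 : ℝ) < n := by exact_mod_cast (by omega : 1 < n)
  refine ⟨minWidth_regularPolygon ⟨m, hn⟩, ?_, ?_⟩
  · exact_mod_cast polygonVertex_chord_length (k := m + 1) (by omega : m + 1 ≤ n)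
  · rw [sin_succ_mul_pi_div hn]
    exact one_add_cos_lt_two_mul_cos_half (by positivity) (div_lt_self pi_pos hn₁)

lemma vtx_eq_polygonVertex (k : ℕ) : vtx k = polygonVertex 5 k := by
  simp only [vtx, polygonVertex, circlePoint, Int.cast_natCast, Nat.cast_ofNat]

lemma hK_eq_supportFun : hK = supportFun (regularPolygon 5) := by
  ext u
  simp only [hK, supportFun, regularPolygon, vtx_eq_polygonVertex]

end RegularPolygon

/-- The minimal width of the regular pentagon is 1 + cos(π/5), and the diagonal
length 2 sin(3π/5) exceeds it. -/
theorem pentagon_minimal_width :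
    sInf {r : ℝ | ∃ u : ℝ × ℝ, u.1^2 + u.2^2 = 1 ∧ r = hK u + hK (-u)}
        = 1 + Real.cos (π/5) ∧
      Real.sqrt ((vtx 3 - vtx 0).1^2 + (vtx 3 - vtx 0).2^2) = 2 * Real.sin (3*π/5) ∧
      2 * Real.sin (3*π/5) > 1 + Real.cos (π/5) := by
  simpa only [hK_eq_supportFun, vtx_eq_polygonVertex, minWidth, directionalWidth,
    Nat.cast_ofNat, Nat.cast_zero, two_add_one_eq_three, gt_iff_lt] using
    pentagon_minimal_width_general (n := 5) (m := 2) rfl two_pos
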